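/- arXiv:math/9905118 — 8 statements merged into one kernel-verified Lean document; each statement's English description precedes it below -/
import Mathlib

section
/- Let A ⊆ ℝ be an Arbault set and let X ⊆ ℝ be a set of real numbers with |X| < 𝔰. Then both A ∪ X and A + X are Arbault sets. -/
/-!
Let `f` witness that `A` is an Arbault set. Fewer than `𝔰` bounded real sequences have a common
convergent subsequence (`exists_subseq_tendsto`): for infinitely many sequences, an infinite set of
indices split by none of the rational level sets `{n | u n < q}` makes every sequence converge,
since no sequence can oscillate across a rational interval; for countably many sequences this is
compactness of a countable product of intervals. Hence along some subsequence `g` of `f` both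
`sin (π g(n) x)` and `cos (π g(n) x)` converge for every `x ∈ X`. With `m n = g n + n`, the
differences `h n = g (m n) - g n` are strictly increasing, and the subtraction formula for the
sine gives `sin (π h(n) x) → 0` both for `x ∈ X` (the two products have the same limit) and for
`x ∈ A` (both products tend to `0`). So `h` witnesses that `A ∪ X` is an Arbault set, and by the
addition formula for the sine it also serves `A + X`.
-/

open Filter Real Set

/-- `A` is an Arbault set: there is a strictly increasing `f : ℕ → ℕ` such that
`sin (π f(n) x) → 0` for every `x ∈ A`. -/
def IsArbaultSet (A : Set ℝ) : Prop :=
  ∃ f : ℕ → ℕ, StrictMono f ∧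
    ∀ x ∈ A, Tendsto (fun n => Real.sin (π * f n * x)) atTop (nhds 0)

/-- The splitting number 𝔰: the least cardinality of a splitting family of
infinite subsets of `ℕ`. -/
noncomputable def splittingNumber : Cardinal :=
  sInf { κ : Cardinal | ∃ 𝒜 : Set (Set ℕ), Cardinal.mk 𝒜 = κ ∧
    (∀ A ∈ 𝒜, A.Infinite) ∧
    ∀ B : Set ℕ, B.Infinite → ∃ A ∈ 𝒜, (B ∩ A).Infinite ∧ (B \ A).Infinite }

/-- A family of fewer than `𝔰` sets leaves some infinite set unsplit. Members of `𝒜` may be finite,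
as finite sets never split anything. -/
lemma exists_unsplit (𝒜 : Set (Set ℕ)) (h : Cardinal.mk 𝒜 < splittingNumber) :
    ∃ B : Set ℕ, B.Infinite ∧ ∀ A ∈ 𝒜, ¬ ((B ∩ A).Infinite ∧ (B \ A).Infinite) := by
  by_contra! hcon
  have hle : splittingNumber ≤ Cardinal.mk {A ∈ 𝒜 | A.Infinite} := by
    refine csInf_le' ⟨_, rfl, fun A hA => hA.2, fun B hB => ?_⟩
    obtain ⟨A, hA, h1, h2⟩ := hcon B hB
    exact ⟨A, ⟨hA, h1.mono inter_subset_right⟩, h1, h2⟩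
  exact absurd (hle.trans (Cardinal.mk_le_mk_of_subset (sep_subset _ _))) (not_le.2 h)

/-- Fewer than `𝔰` bounded real sequences have a common convergent subsequence. -/
lemma exists_subseq_tendsto {ι : Type} (hι : Cardinal.mk ι < splittingNumber)
    (u : ι → ℕ → ℝ) (hu : ∀ i n, u i n ∈ Icc (-1 : ℝ) 1) :
    ∃ φ : ℕ → ℕ, StrictMono φ ∧ ∀ i, ∃ l, Tendsto (fun n => u i (φ n)) atTop (nhds l) := by
  rcases le_or_gt (Cardinal.mk ι) Cardinal.aleph0 with hc | hc
  · have : Countable ι := Cardinal.mk_le_aleph0_iff.1 hc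
    have hK : IsCompact (Set.univ.pi fun _ : ι => Icc (-1 : ℝ) 1) :=
      isCompact_univ_pi fun _ => isCompact_Icc
    obtain ⟨a, -, φ, hφ, ha⟩ := hK.tendsto_subseq (x := fun n i => u i n)
      fun n i _ => hu i n
    exact ⟨φ, hφ, fun i => ⟨a i, (tendsto_pi_nhds.1 ha) i⟩⟩
  · let S : ι × ℚ → Set ℕ := fun p => {n | u p.1 n < p.2}
    have hcard : Cardinal.mk (Set.range S) < splittingNumber := by
      refine lt_of_le_of_lt Cardinal.mk_range_le ?_
      rw [Cardinal.mk_prod, Cardinal.lift_id, Cardinal.lift_id, Cardinal.mkRat,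
        Cardinal.mul_aleph0_eq hc.le]
      exact hι
    obtain ⟨B, hB, hsplit⟩ := exists_unsplit _ hcard
    have hmono : StrictMono (Nat.nth (· ∈ B)) := Nat.nth_strictMono hB
    refine ⟨Nat.nth (· ∈ B), hmono, fun i => ?_⟩
    have hmem : ∀ n, Nat.nth (· ∈ B) n ∈ B := fun n => Nat.nth_mem_of_infinite hB n
    -- Frequent events along the enumeration of `B` give infinite subsets of `B`.
    have hfreq : ∀ P : ℕ → Prop, (∃ᶠ n in atTop, P (Nat.nth (· ∈ B) n)) →
        {n ∈ B | P n}.Infinite := fun P hP =>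
      ((Nat.frequently_atTop_iff_infinite.1 hP).image hmono.injective.injOn).mono (by
        rintro _ ⟨n, hn, rfl⟩
        exact ⟨hmem n, hn⟩)
    refine tendsto_of_no_upcrossings (s := Set.range ((↑) : ℚ → ℝ)) Rat.denseRange_cast ?_
      (isBoundedUnder_of ⟨1, fun n => (hu i _).2⟩)
      (isBoundedUnder_of ⟨-1, fun n => (hu i _).1⟩)
    rintro _ ⟨a, rfl⟩ _ ⟨b, rfl⟩ hab ⟨h1, h2⟩
    refine hsplit _ ⟨(i, a), rfl⟩ ⟨(hfreq (fun n => u i n < a) h1).mono ?_,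
      (hfreq (fun n => (b : ℝ) < u i n) h2).mono ?_⟩
    · exact fun n hn => hn
    · exact fun n hn => ⟨hn.1, not_lt.2 (hab.trans hn.2).le⟩

/-- If `sin` and `cos` of `π * g n * x` tend to `s` and `c` for `x ∈ X`, and `sin` tends to `0` for
`x ∈ A`, then the differences of `g` along a sparse set of indices witness that `A ∪ X` is an
Arbault set. -/
lemma isArbaultSet_union_of_subseq {A X : Set ℝ} {g : ℕ → ℕ} (hg : StrictMono g)
    (hA : ∀ x ∈ A, Tendsto (fun n => Real.sin (π * g n * x)) atTop (nhds 0))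
    (hs : ∀ x ∈ X, ∃ s, Tendsto (fun n => Real.sin (π * g n * x)) atTop (nhds s))
    (hc : ∀ x ∈ X, ∃ c, Tendsto (fun n => Real.cos (π * g n * x)) atTop (nhds c)) :
    IsArbaultSet (A ∪ X) := by
  let m : ℕ → ℕ := fun n => g n + n
  have hm : Tendsto m atTop atTop := tendsto_atTop_mono (fun n => Nat.le_add_left n (g n)) tendsto_id
  have hle : ∀ n, g n ≤ g (m n) := fun n => hg.monotone (Nat.le_add_left n (g n))
  have hsub : ∀ (x : ℝ) (n : ℕ), Real.sin (π * ((g (m n) - g n : ℕ) : ℝ) * x) =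
      Real.sin (π * g (m n) * x) * Real.cos (π * g n * x) -
        Real.cos (π * g (m n) * x) * Real.sin (π * g n * x) := by
    intro x n
    rw [← Real.sin_sub, Nat.cast_sub (hle n)]
    ring_nf
  refine ⟨fun n => g (m n) - g n, strictMono_nat_of_lt_succ fun n => ?_, fun x hx => ?_⟩
  · -- `m` jumps by `g (n + 1) - g n + 1`, so `g ∘ m` jumps by at least that much.
    have h1 : g n < g (n + 1) := hg (Nat.lt_succ_self n)
    have h2 : (g (n + 1) - g n + 1) + g (m n) ≤ g ((g (n + 1) - g n + 1) + m n) :=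
      hg.add_le_nat _ _
    have h3 : (g (n + 1) - g n + 1) + m n = m (n + 1) := by
      simp only [m]; omega
    rw [h3] at h2
    have := hle n
    have := hle (n + 1)
    omega
  · simp only [hsub]
    rcases hx with hx | hx
    · have h0 := hA x hx
      have h1 : Tendsto (fun n => Real.sin (π * g (m n) * x) * Real.cos (π * g n * x))
          atTop (nhds 0) :=
        (h0.comp hm).zero_mul_isBoundedUnder_le
          (isBoundedUnder_of ⟨1, fun n => Real.abs_cos_le_one _⟩)
      have h2 : Tendsto (fun n => Real.cos (π * g (m n) * x) * Real.sin (π * g n * x))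
          atTop (nhds 0) :=
        isBoundedUnder_le_mul_tendsto_zero
          (isBoundedUnder_of ⟨1, fun n => Real.abs_cos_le_one _⟩) h0
      simpa using h1.sub h2
    · obtain ⟨s, hs⟩ := hs x hx
      obtain ⟨c, hc⟩ := hc x hx
      have := ((hs.comp hm).mul hc).sub ((hc.comp hm).mul hs)
      rwa [mul_comm c s, sub_self] at this

open Pointwise in
lemma IsArbaultSet.add_of_union {A X : Set ℝ} (h : IsArbaultSet (A ∪ X)) :
    IsArbaultSet (A + X) := by
  obtain ⟨f, hf, h⟩ := h
  refine ⟨f, hf, ?_⟩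
  rintro _ ⟨a, ha, x, hx, rfl⟩
  have h1 : Tendsto (fun n => Real.sin (π * f n * a) * Real.cos (π * f n * x)) atTop (nhds 0) :=
    (h a (Or.inl ha)).zero_mul_isBoundedUnder_le
      (isBoundedUnder_of ⟨1, fun n => Real.abs_cos_le_one _⟩)
  have h2 : Tendsto (fun n => Real.cos (π * f n * a) * Real.sin (π * f n * x)) atTop (nhds 0) :=
    isBoundedUnder_le_mul_tendsto_zero
      (isBoundedUnder_of ⟨1, fun n => Real.abs_cos_le_one _⟩) (h x (Or.inr hx))
  simpa [mul_add, Real.sin_add] using h1.add h2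

open Pointwise in
theorem arbault_union_and_sum_with_small_set (A X : Set ℝ)
    (hA : IsArbaultSet A) (hX : Cardinal.mk X < splittingNumber) :
    IsArbaultSet (A ∪ X) ∧ IsArbaultSet (A + X) := by
  suffices h : IsArbaultSet (A ∪ X) from ⟨h, h.add_of_union⟩
  obtain ⟨f, hf, hA⟩ := hA
  obtain ⟨φ, hφ, hs⟩ := exists_subseq_tendsto hX
    (fun (x : X) n => Real.sin (π * f n * x)) fun x n => Real.sin_mem_Icc _
  obtain ⟨ψ, hψ, hc⟩ := exists_subseq_tendsto hX
    (fun (x : X) n => Real.cos (π * f (φ n) * x)) fun x n => Real.cos_mem_Icc _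
  refine isArbaultSet_union_of_subseq (g := fun n => f (φ (ψ n))) (hf.comp (hφ.comp hψ))
    (fun x hx => (hA x hx).comp (hφ.comp hψ).tendsto_atTop) (fun x hx => ?_)
    (fun x hx => hc ⟨x, hx⟩)
  obtain ⟨s, hs⟩ := hs ⟨x, hx⟩
  exact ⟨s, hs.comp hψ.tendsto_atTop⟩
end

section
/- Let A ⊆ ℝ be an H_σ-set and let X ⊆ ℝ be a set of real numbers with |X| < 𝔰. Then A ∪ X is an H_σ-set. -/
/-!
The union of two H_σ-sets is an H_σ-set, so it suffices to treat `X` alone. For `x ∈ X` let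
`D x` be the set of those `n` for which the fractional part of `n * x` is below `1/2`. Since there
are fewer than `𝔰` such sets, some infinite `B ⊆ ℕ` is split by none of them
(`exists_unsplit_set`): for each `x ∈ X`, the fractional parts of `n * x`, `n ∈ B`, eventually
all lie in `[0, 1/2)` or eventually all lie in `[1/2, 1)`, so eventually all lie within `1/4` of
the centre `1/4` or `3/4`. Sorting the points of `X` by the choice of the centre and by the place
in the enumeration of `B` from which this holds gives countably many H-sets.
-/

open Filter Real Set

/-- The distance from a real number to the nearest integer. -/
noncomputable def distNearestInt (y : ℝ) : ℝ := |y - round y|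

/-- `A` is an H-set (Hardy set): there exist `a ∈ (0,1)`, `ε < 1/2` and a strictly
increasing `f : ℕ → ℕ` with `‖f(n)·x − a‖ < ε` for all `x ∈ A` and all `n`. -/
def IsHSet (A : Set ℝ) : Prop :=
  ∃ a ∈ Set.Ioo (0 : ℝ) 1, ∃ ε : ℝ, ε < 1 / 2 ∧ ∃ f : ℕ → ℕ, StrictMono f ∧
    ∀ x ∈ A, ∀ n : ℕ, distNearestInt (f n * x - a) < ε

/-- `A` is an H_σ-set: a countable union of H-sets. -/
def IsHSigmaSet (A : Set ℝ) : Prop :=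
  ∃ S : ℕ → Set ℝ, (∀ n, IsHSet (S n)) ∧ A = ⋃ n, S n

lemma isHSigmaSet_iUnion {ι : Type*} [Countable ι] [Nonempty ι] (T : ι → Set ℝ)
    (hT : ∀ i, IsHSet (T i)) : IsHSigmaSet (⋃ i, T i) := by
  obtain ⟨e, he⟩ := exists_surjective_nat ι
  exact ⟨fun n => T (e n), fun n => hT _, (he.iUnion_comp T).symm⟩

lemma distNearestInt_le (y : ℝ) (z : ℤ) : distNearestInt y ≤ |y - z| := round_le y z

/-- Fewer than `𝔰` subsets of `ℕ`, not necessarily infinite ones, leave some infinite set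
unsplit. -/
lemma exists_unsplit_set (X : Set ℝ) (hX : Cardinal.mk X < splittingNumber) (D : ℝ → Set ℕ) :
    ∃ B : Set ℕ, B.Infinite ∧ ∀ x ∈ X, (B ∩ D x).Finite ∨ (B \ D x).Finite := by
  by_contra! h
  have hle : splittingNumber ≤ Cardinal.mk (D '' X) := by
    -- Only the infinite members may be kept, since a splitting family consists of infinite sets.
    have hsub : {A ∈ D '' X | A.Infinite} ⊆ D '' X := Set.sep_subset _ _
    refine le_trans (csInf_le' ⟨{A ∈ D '' X | A.Infinite}, rfl, fun A hA => hA.2, ?_⟩)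
      (Cardinal.mk_le_mk_of_subset hsub)
    intro B hB
    obtain ⟨x, hx, h1, h2⟩ := h B hB
    exact ⟨D x, ⟨⟨x, hx, rfl⟩, h1.mono Set.inter_subset_right⟩, h1, h2⟩
  exact absurd (hle.trans Cardinal.mk_image_le) (not_le.mpr hX)

/-- If `B \ C` is finite, all terms of the increasing enumeration of `B` from
some index on lie in `C`. -/
lemma exists_nth_mem {B : Set ℕ} (hB : B.Infinite) {C : Set ℕ} (h : (B \ C).Finite) :
    ∃ N, ∀ n, Nat.nth (· ∈ B) (n + N) ∈ C := by
  obtain ⟨M, hM⟩ := h.bddAbove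
  refine ⟨M + 1, fun n => ?_⟩
  by_contra hn
  have h1 : Nat.nth (· ∈ B) (n + (M + 1)) ≤ M := hM ⟨Nat.nth_mem_of_infinite hB _, hn⟩
  have h2 := (Nat.nth_strictMono hB).le_apply (x := n + (M + 1))
  have h3 := h2.trans h1
  omega

theorem hSigma_union_with_small_set (A X : Set ℝ)
    (hA : IsHSigmaSet A) (hX : Cardinal.mk X < splittingNumber) :
    IsHSigmaSet (A ∪ X) := by
  obtain ⟨S, hS, rfl⟩ := hA
  obtain ⟨B, hB, hBX⟩ := exists_unsplit_set X hX fun x => {n : ℕ | Int.fract (n * x) < 1 / 2}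
  let c : Bool → ℝ := fun b => if b then 1 / 4 else 3 / 4
  let T : Bool × ℕ → Set ℝ := fun p =>
    {x ∈ X | ∀ n, distNearestInt (Nat.nth (· ∈ B) (n + p.2) * x - c p.1) < 1 / 3}
  have hT : ∀ p, IsHSet (T p) := by
    rintro ⟨b, N⟩
    refine ⟨c b, ?_, 1 / 3, by norm_num, fun n => Nat.nth (· ∈ B) (n + N), ?_, fun x hx => hx.2⟩
    · cases b <;> norm_num [c]
    · intro m n hmn
      exact Nat.nth_strictMono hB (by omega)
  have hXT : X = ⋃ p, T p := by
    refine Set.Subset.antisymm (fun x hx => ?_) (Set.iUnion_subset fun p => Set.sep_subset _ _)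
    rw [Set.mem_iUnion]
    rcases hBX x hx with h | h
    · rw [← Set.sdiff_compl] at h
      obtain ⟨N, hN⟩ := exists_nth_mem hB h
      refine ⟨(false, N), hx, fun n => ?_⟩
      have h1 : 1 / 2 ≤ Int.fract ((Nat.nth (· ∈ B) (n + N) : ℝ) * x) := not_lt.mp (hN n)
      have h2 := Int.fract_lt_one ((Nat.nth (· ∈ B) (n + N) : ℝ) * x)
      refine (distNearestInt_le _ ⌊(Nat.nth (· ∈ B) (n + N) : ℝ) * x⌋).trans_lt ?_
      rw [Int.fract] at h1 h2
      simp only [c, Bool.false_eq_true, if_false]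
      rw [abs_lt]
      constructor <;> linarith
    · obtain ⟨N, hN⟩ := exists_nth_mem hB h
      refine ⟨(true, N), hx, fun n => ?_⟩
      have h1 : Int.fract ((Nat.nth (· ∈ B) (n + N) : ℝ) * x) < 1 / 2 := hN n
      have h2 := Int.fract_nonneg ((Nat.nth (· ∈ B) (n + N) : ℝ) * x)
      refine (distNearestInt_le _ ⌊(Nat.nth (· ∈ B) (n + N) : ℝ) * x⌋).trans_lt ?_
      rw [Int.fract] at h1 h2
      simp only [c, if_true]
      rw [abs_lt]
      constructor <;> linarith
  have hU := isHSigmaSet_iUnion (Sum.elim S T) (by rintro (n | p); exacts [hS n, hT p])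
  rw [Set.iUnion_sum] at hU
  rw [hXT]
  exact hU
end

section
/- Let A and B be two nonempty sets of real numbers. Then A ∪ B is an N-set if and only if A + B is an N-set. -/
/-!
Since `|sin (u ± v)| ≤ |sin u| + |sin v|`, the set of `x` at which `∑ a n * |sin (π n x)|` converges
is closed under sums and differences. A sequence witnessing that `A ∪ B` is an N-set therefore
also witnesses it for `A + B`. Conversely, fix `p ∈ A` and `q ∈ B`: if a sequence works for
`A + B` together with the two points `p, q`, then it works for `x = (x + q) - q ∈ A` and for
`y = (p + y) - p ∈ B`.

So the heart of the matter is the theorem of Arbault and Erdős that adjoining a point `y` to an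
N-set gives an N-set (`IsNSet.insert`). With `s n = 1 + ∑ k ≤ n, a k`, Dirichlet's approximation
theorem gives `1 ≤ k n ≤ s n` with `k n * n * y` within `1 / s n` of an integer. Put the weight
`a n / s n` at the frequency `k n * n`. The total weight is infinite and `∑ a n / s n ^ 2` is finite
(Abel–Dini), which gives convergence at `y`; convergence at the old points follows from
`|sin (k t)| ≤ k |sin t|` and `k n ≤ s n`.
-/

open Filter Real Set

/-- `A` is an N-set: there is a sequence of nonnegative reals `a` with divergent sum
such that `∑ a n * |sin (π n x)|` converges for every `x ∈ A`. -/
def IsNSet (A : Set ℝ) : Prop :=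
  ∃ a : ℕ → ℝ, (∀ n, 0 ≤ a n) ∧ ¬ Summable a ∧
    ∀ x ∈ A, Summable fun n => a n * |Real.sin (π * n * x)|

lemma abs_sin_add_le (u v : ℝ) : |Real.sin (u + v)| ≤ |Real.sin u| + |Real.sin v| := by
  rw [Real.sin_add]
  refine (abs_add_le _ _).trans ?_
  rw [abs_mul, abs_mul]
  exact add_le_add (mul_le_of_le_one_right (abs_nonneg _) (Real.abs_cos_le_one _))
    (mul_le_of_le_one_left (abs_nonneg _) (Real.abs_cos_le_one _))

lemma abs_sin_nat_mul_le (k : ℕ) (t : ℝ) : |Real.sin (k * t)| ≤ k * |Real.sin t| := by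
  induction k with
  | zero => simp
  | succ k ih =>
    have h := abs_sin_add_le (k * t) t
    push_cast
    rw [add_mul, one_mul, add_mul, one_mul]
    linarith

lemma abs_sin_pi_mul_le (t : ℝ) : |Real.sin (π * t)| ≤ π * |t - round t| := by
  have h : |Real.sin (π * t)| = |Real.sin (π * (t - round t))| := by
    rw [mul_sub, mul_comm π (round t : ℝ), Real.sin_sub_int_mul_pi, abs_mul, abs_zpow]
    simp
  rw [h]
  refine Real.abs_sin_le_abs.trans ?_
  rw [abs_mul, abs_of_pos Real.pi_pos]

lemma summable_weight_add {a : ℕ → ℝ} (ha : ∀ n, 0 ≤ a n) {x y : ℝ}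
    (hx : Summable fun n : ℕ => a n * |Real.sin (π * n * x)|)
    (hy : Summable fun n : ℕ => a n * |Real.sin (π * n * y)|) :
    Summable fun n : ℕ => a n * |Real.sin (π * n * (x + y))| := by
  refine Summable.of_nonneg_of_le (fun n => mul_nonneg (ha n) (abs_nonneg _)) (fun n => ?_)
    (hx.add hy)
  rw [← mul_add, mul_add (π * n)]
  exact mul_le_mul_of_nonneg_left (abs_sin_add_le _ _) (ha n)

lemma summable_weight_neg {a : ℕ → ℝ} {x : ℝ}
    (hx : Summable fun n : ℕ => a n * |Real.sin (π * n * x)|) :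
    Summable fun n : ℕ => a n * |Real.sin (π * n * (-x))| := by
  simpa using hx

/-- `1 + ∑ k < n, a k`; the leading `1` keeps it positive, and at least `1`. -/
noncomputable def shiftedSum (a : ℕ → ℝ) (n : ℕ) : ℝ := 1 + ∑ k ∈ Finset.range n, a k

lemma shiftedSum_succ (a : ℕ → ℝ) (n : ℕ) : shiftedSum a (n + 1) = shiftedSum a n + a n := by
  simp [shiftedSum, Finset.sum_range_succ, add_assoc]

lemma one_le_shiftedSum {a : ℕ → ℝ} (ha : ∀ n, 0 ≤ a n) (n : ℕ) : 1 ≤ shiftedSum a n :=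
  le_add_of_nonneg_right (Finset.sum_nonneg fun k _ => ha k)

lemma shiftedSum_mono {a : ℕ → ℝ} (ha : ∀ n, 0 ≤ a n) : Monotone (shiftedSum a) :=
  monotone_nat_of_le_succ fun n => by rw [shiftedSum_succ]; linarith [ha n]

/-- The divergence half of the Abel–Dini theorem. -/
lemma not_summable_div_shiftedSum {a : ℕ → ℝ} (ha : ∀ n, 0 ≤ a n) (hs : ¬ Summable a) :
    ¬ Summable fun n => a n / shiftedSum a (n + 1) := by
  rintro ⟨L, hL⟩
  have hT := hL.tendsto_sum_nat
  have hS : Tendsto (shiftedSum a) atTop atTop :=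
    tendsto_atTop_add_const_left _ _ ((not_summable_iff_tendsto_nat_atTop_of_nonneg ha).1 hs)
  -- The terms with `N ≤ n < M` contribute at least `(S M - S N) / S M`, as `S` is monotone.
  have key : ∀ N M, N ≤ M → 1 - shiftedSum a N / shiftedSum a M ≤
      ∑ n ∈ Finset.range M, a n / shiftedSum a (n + 1)
        - ∑ n ∈ Finset.range N, a n / shiftedSum a (n + 1) := by
    intro N M hNM
    have hM : 0 < shiftedSum a M := one_pos.trans_le (one_le_shiftedSum ha M)
    rw [← Finset.sum_Ico_eq_sub _ hNM]
    calc 1 - shiftedSum a N / shiftedSum a M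
        = (shiftedSum a M - shiftedSum a N) / shiftedSum a M := by
          rw [sub_div, div_self hM.ne']
      _ = ∑ n ∈ Finset.Ico N M, a n / shiftedSum a M := by
          rw [← Finset.sum_div, Finset.sum_Ico_eq_sub _ hNM]
          simp [shiftedSum]
      _ ≤ _ := by
          refine Finset.sum_le_sum fun n hn => ?_
          have hnM := (Finset.mem_Ico.1 hn).2
          exact div_le_div_of_nonneg_left (ha n)
            (one_pos.trans_le (one_le_shiftedSum ha _)) (shiftedSum_mono ha hnM)
  -- Letting `M → ∞` shows that every tail of the series is at least `1`.
  have h1 : ∀ N, 1 ≤ L - ∑ n ∈ Finset.range N, a n / shiftedSum a (n + 1) := by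
    intro N
    have l : Tendsto (fun M => 1 - shiftedSum a N / shiftedSum a M) atTop (nhds (1 - 0)) :=
      tendsto_const_nhds.sub (hS.const_div_atTop _)
    rw [sub_zero] at l
    exact le_of_tendsto_of_tendsto l (hT.sub_const _)
      ((eventually_ge_atTop N).mono fun M hM => key N M hM)
  have h2 : (1 : ℝ) ≤ L - L := ge_of_tendsto' (hT.const_sub L) h1
  linarith

/-- The convergence half of the Abel–Dini theorem, for the exponent `2`: the terms are dominated
by the differences of `1 / shiftedSum a`, which telescope. -/
lemma summable_div_shiftedSum_sq {a : ℕ → ℝ} (ha : ∀ n, 0 ≤ a n) :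
    Summable fun n => a n / shiftedSum a (n + 1) ^ 2 := by
  have hp : ∀ n, 0 < shiftedSum a n := fun n => one_pos.trans_le (one_le_shiftedSum ha n)
  refine summable_of_sum_range_le (c := (shiftedSum a 0)⁻¹)
    (fun n => div_nonneg (ha n) (sq_nonneg _)) fun n => ?_
  have h : ∑ i ∈ Finset.range n, a i / shiftedSum a (i + 1) ^ 2 ≤
      ∑ i ∈ Finset.range n, ((shiftedSum a i)⁻¹ - (shiftedSum a (i + 1))⁻¹) := by
    refine Finset.sum_le_sum fun i _ => ?_
    rw [inv_sub_inv (hp _).ne' (hp _).ne', sq]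
    have e : shiftedSum a (i + 1) - shiftedSum a i = a i := by rw [shiftedSum_succ]; ring
    rw [e]
    refine div_le_div_of_nonneg_left (ha i) (mul_pos (hp _) (hp _)) ?_
    exact mul_le_mul_of_nonneg_right (shiftedSum_mono ha i.le_succ) (hp _).le
  rw [Finset.sum_range_sub'] at h
  linarith [inv_pos.2 (hp n)]

/-- Collecting the weights `c n` placed at positions `j n`, when no position is used infinitely
often, turns `∑ c n * f (j n)` into `∑ b m * f m`. -/
lemma exists_pushforward_weights {c : ℕ → ℝ} (hc : ∀ n, 0 ≤ c n) {j : ℕ → ℕ}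
    (hj : ∀ m, {n | j n = m}.Finite) :
    ∃ b : ℕ → ℝ, (∀ m, 0 ≤ b m) ∧ ∀ f : ℕ → ℝ, (∀ m, 0 ≤ f m) →
      ((Summable fun m => b m * f m) ↔ Summable fun n => c n * f (j n)) := by
  refine ⟨fun m => ∑' n : {n // j n = m}, c n, fun m => tsum_nonneg fun n => hc _, fun f hf => ?_⟩
  rw [← (Equiv.sigmaFiberEquiv j).summable_iff (f := fun n => c n * f (j n)),
    summable_sigma_of_nonneg
      (f := (fun n => c n * f (j n)) ∘ Equiv.sigmaFiberEquiv j)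
      (fun _ => mul_nonneg (hc _) (hf _))]
  have hfib : ∀ m, Summable fun n : {n // j n = m} =>
      ((fun n => c n * f (j n)) ∘ Equiv.sigmaFiberEquiv j) ⟨m, n⟩ := by
    intro m
    have : Finite {n // j n = m} := (hj m).to_subtype
    exact Summable.of_finite
  rw [and_iff_right hfib]
  refine summable_congr fun m => ?_
  rw [← tsum_mul_right]
  refine tsum_congr fun n => ?_
  change c n * f m = c n * f (j n)
  rw [n.2]

/-- Adjoining a point to an N-set gives an N-set (Arbault–Erdős). -/
lemma IsNSet.insert {X : Set ℝ} (hX : IsNSet X) (y : ℝ) : IsNSet (insert y X) := by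
  obtain ⟨a, ha, hdiv, hconv⟩ := hX
  set s : ℕ → ℝ := fun n => shiftedSum a (n + 1) with hs
  have h1s : ∀ n, 1 ≤ s n := fun n => one_le_shiftedSum ha _
  have hsp : ∀ n, 0 < s n := fun n => one_pos.trans_le (h1s n)
  have hdir : ∀ n : ℕ, ∃ k : ℕ, 0 < k ∧ (k : ℝ) ≤ s n ∧
      |k * (n * y) - round ((k : ℝ) * (n * y))| ≤ 1 / s n := by
    intro n
    obtain ⟨k, hk0, hk, hle⟩ := Real.exists_nat_abs_mul_sub_round_le (n * y)
      (Nat.floor_pos.2 (h1s n))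
    refine ⟨k, hk0, (Nat.cast_le.2 hk).trans (Nat.floor_le (hsp n).le), hle.trans ?_⟩
    exact one_div_le_one_div_of_le (hsp n) (Nat.lt_floor_add_one _).le
  choose k hk0 hks hky using hdir
  have hc : ∀ n, 0 ≤ a n / s n := fun n => div_nonneg (ha n) (hsp n).le
  -- As `k n ≥ 1`, the equation `k n * n = m` forces `n ≤ m`.
  have hfin : ∀ m, {n | k n * n = m}.Finite := fun m =>
    (Set.finite_Iic m).subset fun n hn => by
      have hnM : k n * n = m := hn
      exact (Nat.le_mul_of_pos_left n (hk0 n)).trans hnM.le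
  obtain ⟨b, hb, hbf⟩ := exists_pushforward_weights hc hfin
  refine ⟨b, hb, fun hsum => ?_, ?_⟩
  · have h := (hbf (fun _ => 1) fun _ => zero_le_one).1 (by simpa using hsum)
    exact not_summable_div_shiftedSum ha hdiv (by simpa using h)
  · intro x hx
    refine (hbf (fun m => |Real.sin (π * m * x)|) fun _ => abs_nonneg _).2 ?_
    have hnn : ∀ n, 0 ≤ a n / s n * |Real.sin (π * ((k n * n : ℕ) : ℝ) * x)| :=
      fun n => mul_nonneg (hc n) (abs_nonneg _)
    rcases hx with rfl | hx
    · refine Summable.of_nonneg_of_le hnn (fun n => ?_)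
        ((summable_div_shiftedSum_sq ha).mul_right π)
      have e : π * ((k n * n : ℕ) : ℝ) * x = π * (k n * (n * x)) := by push_cast; ring
      rw [e]
      calc a n / s n * |Real.sin (π * (k n * (n * x)))|
          ≤ a n / s n * (π * (1 / s n)) :=
            mul_le_mul_of_nonneg_left ((abs_sin_pi_mul_le _).trans
              (mul_le_mul_of_nonneg_left (hky n) Real.pi_pos.le)) (hc n)
        _ = a n / s n ^ 2 * π := by
            have := (hsp n).ne'
            field_simp
    · refine Summable.of_nonneg_of_le hnn (fun n => ?_) (hconv x hx)
      have e : π * ((k n * n : ℕ) : ℝ) * x = k n * (π * n * x) := by push_cast; ring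
      rw [e]
      calc a n / s n * |Real.sin (k n * (π * n * x))|
          ≤ a n / s n * (s n * |Real.sin (π * n * x)|) :=
            mul_le_mul_of_nonneg_left ((abs_sin_nat_mul_le _ _).trans
              (mul_le_mul_of_nonneg_right (hks n) (abs_nonneg _))) (hc n)
        _ = a n * |Real.sin (π * n * x)| := by
            rw [← mul_assoc, div_mul_cancel₀ _ (hsp n).ne']

open Pointwise in
theorem nset_union_iff_sum (A B : Set ℝ) (hA : A.Nonempty) (hB : B.Nonempty) :
    IsNSet (A ∪ B) ↔ IsNSet (A + B) := by
  constructor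
  · rintro ⟨a, ha, hdiv, hconv⟩
    refine ⟨a, ha, hdiv, ?_⟩
    rintro _ ⟨x, hx, y, hy, rfl⟩
    exact summable_weight_add ha (hconv x (Or.inl hx)) (hconv y (Or.inr hy))
  · intro h
    obtain ⟨p, hp⟩ := hA
    obtain ⟨q, hq⟩ := hB
    obtain ⟨a, ha, hdiv, hconv⟩ := (h.insert q).insert p
    have hsum : ∀ x ∈ A, ∀ y ∈ B, Summable fun n : ℕ => a n * |Real.sin (π * n * (x + y))| :=
      fun x hx y hy => hconv _ (Or.inr (Or.inr (Set.add_mem_add hx hy)))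
    refine ⟨a, ha, hdiv, ?_⟩
    rintro x (hx | hx)
    · have := summable_weight_add ha (hsum x hx q hq)
        (summable_weight_neg (hconv q (Or.inr (Or.inl rfl))))
      rwa [add_neg_cancel_right] at this
    · have := summable_weight_add ha (hsum p hp x hx)
        (summable_weight_neg (hconv p (Or.inl rfl)))
      rwa [add_comm p, add_neg_cancel_right] at this
end

section
/- Let A and B be two nonempty sets of real numbers. Then A ∪ B is an N₀-set if and only if A + B is an N₀-set. -/
/-!
Summability of `|sin (π f(n) x)|` is inherited by sums and differences of the points `x`. This
gives the forward direction with the same `f`, and in the other direction it shows that, once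
`A + B` and a single point `a₀ ∈ A` are handled by one sequence, so are all of `A` and `B`.
It therefore suffices to adjoin one point `a` to an N₀-set (`exists_strictMono_insert`). Along a
subsequence `h` of `f`, the fractional parts of `h(n) a` converge at a geometric rate; the
consecutive differences `h(n+1) - h(n)` then work for `a`, and they still work for the old set
because `|sin|` is subadditive. Making `h` more than double at each step
(`exists_doubling_subseq`) keeps the differences strictly increasing.
-/

open Filter Real Set

/-- `A` is an N₀-set: there is a strictly increasing `f : ℕ → ℕ` such that
`∑ |sin (π f(n) x)|` converges for every `x ∈ A`. -/
def IsN0Set (A : Set ℝ) : Prop :=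
  ∃ f : ℕ → ℕ, StrictMono f ∧ ∀ x ∈ A, Summable fun n => |Real.sin (π * f n * x)|

lemma abs_sin_add_le_add (x y : ℝ) : |Real.sin (x + y)| ≤ |Real.sin x| + |Real.sin y| := by
  rw [Real.sin_add]
  refine (abs_add_le _ _).trans ?_
  rw [abs_mul, abs_mul]
  have h1 := mul_le_mul_of_nonneg_left (Real.abs_cos_le_one y) (abs_nonneg (Real.sin x))
  have h2 := mul_le_mul_of_nonneg_right (Real.abs_cos_le_one x) (abs_nonneg (Real.sin y))
  linarith

lemma summable_abs_sin_add {u v : ℕ → ℝ} (hu : Summable fun n => |Real.sin (u n)|)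
    (hv : Summable fun n => |Real.sin (v n)|) : Summable fun n => |Real.sin (u n + v n)| :=
  Summable.of_nonneg_of_le (fun _ => abs_nonneg _) (fun _ => abs_sin_add_le_add _ _) (hu.add hv)

lemma summable_abs_sin_sub {u v : ℕ → ℝ} (hu : Summable fun n => |Real.sin (u n)|)
    (hv : Summable fun n => |Real.sin (v n)|) : Summable fun n => |Real.sin (u n - v n)| := by
  have hv' : Summable fun n => |Real.sin (-v n)| := by simpa [Real.sin_neg] using hv
  simpa [sub_eq_add_neg] using summable_abs_sin_add hu hv'

lemma exists_doubling_subseq {h : ℕ → ℕ} (hh : StrictMono h) :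
    ∃ e : ℕ → ℕ, StrictMono e ∧ ∀ n, 2 * h (e n) < h (e (n + 1)) := by
  refine ⟨fun n => Nat.rec 0 (fun _ k => 2 * h k + 1) n, strictMono_nat_of_lt_succ ?_, ?_⟩
  · intro n
    have := hh.le_apply (x := (Nat.rec 0 (fun _ k => 2 * h k + 1) n : ℕ))
    show _ < 2 * h _ + 1
    omega
  · intro n
    exact hh.le_apply (x := 2 * h _ + 1)

/-- The map `|sin (π ·)|` has period `1`, so at `p a - q a` it only sees the fractional parts of
`p a` and `q a`; both being close to `l` makes it small. -/
lemma abs_sin_pi_sub_le (p q a l : ℝ) :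
    |Real.sin (π * p * a - π * q * a)| ≤
      π * (|Int.fract (p * a) - l| + |Int.fract (q * a) - l|) := by
  have e : π * p * a - π * q * a =
      π * (Int.fract (p * a) - Int.fract (q * a)) + ((⌊p * a⌋ - ⌊q * a⌋ : ℤ) : ℝ) * π := by
    simp only [Int.fract]; push_cast; ring
  rw [e, Real.sin_add_int_mul_pi, abs_mul, abs_neg_one_zpow, one_mul]
  refine (Real.abs_sin_le_abs).trans ?_
  rw [abs_mul, abs_of_pos Real.pi_pos]
  refine mul_le_mul_of_nonneg_left ?_ Real.pi_pos.le
  rw [abs_sub_comm (Int.fract (q * a)) l]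
  exact abs_sub_le _ _ _

/-- Adjoining one point to an N₀-set: a single new sequence serves the point `a` and every `x`
served by the old sequence `f`. -/
lemma exists_strictMono_insert {f : ℕ → ℕ} (hf : StrictMono f) (a : ℝ) :
    ∃ g : ℕ → ℕ, StrictMono g ∧ (Summable fun n => |Real.sin (π * g n * a)|) ∧
      ∀ x : ℝ, (Summable fun n => |Real.sin (π * f n * x)|) →
        Summable fun n => |Real.sin (π * g n * x)| := by
  obtain ⟨l, -, φ, hφ, hl⟩ := (isCompact_Icc (a := (0 : ℝ)) (b := 1)).tendsto_subseq
    (x := fun n => Int.fract (f n * a))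
    (fun n => ⟨Int.fract_nonneg _, (Int.fract_lt_one _).le⟩)
  obtain ⟨ψ, hψ, hψl⟩ := Filter.extraction_forall_of_eventually
    (P := fun n m => |Int.fract (f (φ m) * a) - l| < (1 / 2 : ℝ) ^ n) (fun n => by
      simpa [Real.dist_eq] using
        (Metric.tendsto_nhds.1 hl) ((1 / 2 : ℝ) ^ n) (by positivity))
  obtain ⟨e, he, hdouble⟩ := exists_doubling_subseq ((hf.comp hφ).comp hψ)
  have hk : StrictMono fun n => φ (ψ (e n)) := (hφ.comp hψ).comp he
  have hle : ∀ n, f (φ (ψ (e n))) ≤ f (φ (ψ (e (n + 1)))) := fun n =>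
    (hf.comp hk).monotone n.le_succ
  have key : ∀ (x : ℝ) (n : ℕ),
      π * ((f (φ (ψ (e (n + 1)))) - f (φ (ψ (e n))) : ℕ) : ℝ) * x =
        π * f (φ (ψ (e (n + 1)))) * x - π * f (φ (ψ (e n))) * x := by
    intro x n
    rw [Nat.cast_sub (hle n)]; ring
  refine ⟨fun n => f (φ (ψ (e (n + 1)))) - f (φ (ψ (e n))),
    strictMono_nat_of_lt_succ ?_, ?_, ?_⟩
  · intro n
    have h1 := hdouble (n + 1)
    have h2 := hle n
    have h3 := hdouble n
    simp only [Function.comp] at h1 h3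
    omega
  · simp only [key]
    have hs : Summable fun n => |Int.fract (f (φ (ψ (e n))) * a) - l| :=
      Summable.of_nonneg_of_le (fun _ => abs_nonneg _) (fun n => (hψl (e n)).le)
        ((summable_geometric_two).comp_injective he.injective)
    exact Summable.of_nonneg_of_le (fun _ => abs_nonneg _)
      (fun n => abs_sin_pi_sub_le _ _ a l)
      ((((summable_nat_add_iff 1).2 hs).add hs).mul_left π)
  · intro x hx
    simp only [key]
    have hs := hx.comp_injective hk.injective
    exact summable_abs_sin_sub ((summable_nat_add_iff 1).2 hs) hs

open Pointwise in
theorem n0set_union_iff_sum (A B : Set ℝ) (hA : A.Nonempty) (hB : B.Nonempty) :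
    IsN0Set (A ∪ B) ↔ IsN0Set (A + B) := by
  constructor
  · rintro ⟨f, hf, h⟩
    refine ⟨f, hf, ?_⟩
    rintro _ ⟨a, ha, b, hb, rfl⟩
    simpa only [mul_add] using summable_abs_sin_add (h a (Or.inl ha)) (h b (Or.inr hb))
  · rintro ⟨f, hf, h⟩
    obtain ⟨a₀, ha₀⟩ := hA
    obtain ⟨b₀, hb₀⟩ := hB
    obtain ⟨g, hg, hga, hgx⟩ := exists_strictMono_insert hf a₀
    have hsum : ∀ a ∈ A, ∀ b ∈ B, Summable fun n => |Real.sin (π * g n * (a + b))| :=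
      fun a ha b hb => hgx _ (h _ (Set.add_mem_add ha hb))
    have hB' : ∀ b ∈ B, Summable fun n => |Real.sin (π * g n * b)| := by
      intro b hb
      simpa only [← mul_sub, add_sub_cancel_left] using
        summable_abs_sin_sub (hsum a₀ ha₀ b hb) hga
    refine ⟨g, hg, ?_⟩
    rintro x (hx | hx)
    · simpa only [← mul_sub, add_sub_cancel_right] using
        summable_abs_sin_sub (hsum x hx b₀ hb₀) (hB' b₀ hb₀)
    · exact hB' x hx
end

section
/- Let A and B be two nonempty sets of real numbers. Then A ∪ B is an Arbault set if and only if A + B is an Arbault set. -/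
/-!
The set of `x` with `sin (π f(n) x) → 0` is an additive subgroup of `ℝ`, by the addition formula.
This gives one direction with the same `f`.

Conversely, let `f` witness that `A + B` is Arbault and fix `a₀ ∈ A`. By compactness of the square
`[-1, 1] × [-1, 1]`, there is a subsequence `h` of `f` along which both `sin (π h(n) a₀)` and
`cos (π h(n) a₀)` converge. Then the differences `h(2k) - h(k)` satisfy
`sin (π (h(2k) - h(k)) a₀) → 0`, and they still work for every element of `A + B`. Since they tend
to infinity, some subsequence of them is strictly increasing. As `A ∪ B` lies in the subgroup
generated by `A + B` and `a₀`, that subsequence witnesses that `A ∪ B` is Arbault.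
-/

open Filter Real Set

lemma tendsto_sin_add_zero {u v : ℕ → ℝ} (hu : Tendsto (fun n => Real.sin (u n)) atTop (nhds 0))
    (hv : Tendsto (fun n => Real.sin (v n)) atTop (nhds 0)) :
    Tendsto (fun n => Real.sin (u n + v n)) atTop (nhds 0) := by
  -- The addition formula and `|cos| ≤ 1` bound `|sin (u + v)|` by `|sin u| + |sin v|`.
  refine squeeze_zero_norm (a := fun n => |Real.sin (u n)| + |Real.sin (v n)|) (fun n => ?_)
    (by simpa using hu.abs.add hv.abs)
  rw [Real.norm_eq_abs, Real.sin_add]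
  refine (abs_add_le _ _).trans (add_le_add ?_ ?_)
  · rw [abs_mul]
    exact mul_le_of_le_one_right (abs_nonneg _) (Real.abs_cos_le_one _)
  · rw [abs_mul]
    exact mul_le_of_le_one_left (abs_nonneg _) (Real.abs_cos_le_one _)

lemma tendsto_sin_sub_zero {u v : ℕ → ℝ} (hu : Tendsto (fun n => Real.sin (u n)) atTop (nhds 0))
    (hv : Tendsto (fun n => Real.sin (v n)) atTop (nhds 0)) :
    Tendsto (fun n => Real.sin (u n - v n)) atTop (nhds 0) := by
  have hv' : Tendsto (fun n => Real.sin (-v n)) atTop (nhds 0) := by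
    simpa [Real.sin_neg] using hv.neg
  simpa [sub_eq_add_neg] using tendsto_sin_add_zero hu hv'

lemma exists_subseq_tendsto_sin_cos (u : ℕ → ℝ) :
    ∃ (s c : ℝ) (φ : ℕ → ℕ), StrictMono φ ∧
      Tendsto (fun n => Real.sin (u (φ n))) atTop (nhds s) ∧
      Tendsto (fun n => Real.cos (u (φ n))) atTop (nhds c) := by
  have hK : IsCompact (Icc (-1 : ℝ) 1 ×ˢ Icc (-1 : ℝ) 1) := isCompact_Icc.prod isCompact_Icc
  obtain ⟨p, -, φ, hφ, hp⟩ := hK.tendsto_subseq (x := fun n => (Real.sin (u n), Real.cos (u n)))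
    (fun n => ⟨Real.sin_mem_Icc _, Real.cos_mem_Icc _⟩)
  exact ⟨p.1, p.2, φ, hφ, (continuous_fst.tendsto p).comp hp, (continuous_snd.tendsto p).comp hp⟩

open Pointwise in
theorem arbault_union_iff_sum (A B : Set ℝ) (hA : A.Nonempty) (hB : B.Nonempty) :
    IsArbaultSet (A ∪ B) ↔ IsArbaultSet (A + B) := by
  constructor
  · rintro ⟨f, hf, h⟩
    refine ⟨f, hf, ?_⟩
    rintro _ ⟨a, ha, b, hb, rfl⟩
    simpa [mul_add] using tendsto_sin_add_zero (h a (Or.inl ha)) (h b (Or.inr hb))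
  · rintro ⟨f, hf, hfAB⟩
    obtain ⟨a₀, ha₀⟩ := hA
    obtain ⟨b₀, hb₀⟩ := hB
    obtain ⟨s, c, φ, hφ, hs, hc⟩ := exists_subseq_tendsto_sin_cos (fun n => π * f n * a₀)
    have hh : StrictMono (fun k => f (φ k)) := hf.comp hφ
    have hle : ∀ k, f (φ k) ≤ f (φ (2 * k)) := fun k => hh.monotone (by omega)
    have h2 : Tendsto (fun k : ℕ => 2 * k) atTop atTop :=
      tendsto_atTop_mono (fun k => by simp only [id]; omega) tendsto_id
    have hg : Tendsto (fun k => f (φ (2 * k)) - f (φ k)) atTop atTop := by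
      -- A strictly increasing sequence of naturals grows by at least `k` between `k` and `2k`.
      refine tendsto_atTop_mono (fun k => ?_) tendsto_id
      have := hh.add_le_nat k k
      simp only [← two_mul] at this
      simp only [id]
      omega
    obtain ⟨ψ, hψ, hgψ⟩ := strictMono_subseq_of_tendsto_atTop hg
    have key : ∀ x, Tendsto (fun k => Real.sin (π * f (φ (2 * k)) * x - π * f (φ k) * x)) atTop
          (nhds 0) → Tendsto (fun n => Real.sin
            (π * (((fun k => f (φ (2 * k)) - f (φ k)) ∘ ψ) n : ℕ) * x)) atTop (nhds 0) := by
      intro x hx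
      refine (hx.comp hψ.tendsto_atTop).congr fun n => ?_
      simp only [Function.comp]
      rw [Nat.cast_sub (hle _)]
      ring_nf
    have hsum : ∀ x ∈ A + B, Tendsto (fun n => Real.sin
        (π * (((fun k => f (φ (2 * k)) - f (φ k)) ∘ ψ) n : ℕ) * x)) atTop (nhds 0) := by
      intro x hx
      have h1 := (hfAB x hx).comp hφ.tendsto_atTop
      exact key x (tendsto_sin_sub_zero (h1.comp h2) h1)
    have ha : Tendsto (fun n => Real.sin
        (π * (((fun k => f (φ (2 * k)) - f (φ k)) ∘ ψ) n : ℕ) * a₀)) atTop (nhds 0) := by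
      refine key a₀ ?_
      simp only [Real.sin_sub]
      -- The limit is `s * c - c * s`.
      simpa [mul_comm] using ((hs.comp h2).mul hc).sub ((hc.comp h2).mul hs)
    have hb : ∀ b ∈ B, Tendsto (fun n => Real.sin
        (π * (((fun k => f (φ (2 * k)) - f (φ k)) ∘ ψ) n : ℕ) * b)) atTop (nhds 0) := by
      intro b hb
      refine (tendsto_sin_sub_zero (hsum (a₀ + b) (add_mem_add ha₀ hb)) ha).congr fun n => ?_
      ring_nf
    refine ⟨_, hgψ, ?_⟩
    rintro x (hx | hx)
    · refine (tendsto_sin_sub_zero (hsum (x + b₀) (add_mem_add hx hb₀)) (hb b₀ hb₀)).congr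
        fun n => ?_
      ring_nf
    · exact hb x hx
end

section
/- Let x₀ be a real number and let Z be an infinite set of natural numbers. Then there exists an infinite set X ⊆ Z such that for every infinite set Y ⊆ X, the series Σ_{n=1}^∞ ‖(Y(n+1) − Y(n))·x₀‖ converges, where Y(n) denotes the n-th element of Y in increasing order. -/
/-!
The fractional parts of `z * x₀`, for `z ∈ Z`, lie in the compact interval `[0, 1]`, so along a
subsequence `f 0 < f 1 < ⋯` of `Z` they converge to some `c`; thinning out once more, the `k`-th
of them is within `2⁻ᵏ` of `c`. Take `X` to be the range of `f`. The `n`-th element of an infinite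
`Y ⊆ X` is `f (k n)` with `k` strictly increasing, hence `n ≤ k n`, and two elements of `X` whose
fractional parts are within `2⁻ⁿ` of `c` contribute a term of size at most `2 * 2⁻ⁿ`.
-/

open Filter Real Set

/-- The distance to the nearest integer is at most the difference of the fractional parts, because
the difference of the integer parts is an integer. -/
lemma distNearestInt_sub_le (a b : ℝ) :
    distNearestInt (a - b) ≤ |Int.fract a - Int.fract b| := by
  refine (round_le (a - b) (⌊a⌋ - ⌊b⌋)).trans (le_of_eq ?_)
  congr 1
  simp only [Int.fract]
  push_cast
  ring

theorem exists_subset_summable_consecutive_differences (x₀ : ℝ) (Z : Set ℕ)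
    (hZ : Z.Infinite) :
    ∃ X ⊆ Z, X.Infinite ∧
      ∀ Y ⊆ X, Y.Infinite →
        Summable fun n =>
          distNearestInt (((Nat.nth (· ∈ Y) (n + 1) : ℝ) - (Nat.nth (· ∈ Y) n : ℝ)) * x₀) := by
  have hz : StrictMono (Nat.nth (· ∈ Z)) := Nat.nth_strictMono (by simpa using hZ)
  obtain ⟨c, -, φ, hφ, hc⟩ := (isCompact_Icc (a := (0 : ℝ)) (b := 1)).tendsto_subseq
    (x := fun n => Int.fract ((Nat.nth (· ∈ Z) n : ℝ) * x₀))
    (fun n => ⟨Int.fract_nonneg _, (Int.fract_lt_one _).le⟩)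
  obtain ⟨ψ, hψ, hb⟩ := extraction_forall_of_eventually
    (fun n => (Metric.tendsto_nhds.1 hc) ((1 / 2 : ℝ) ^ n) (by positivity))
  set f : ℕ → ℕ := fun n => Nat.nth (· ∈ Z) (φ (ψ n)) with hf
  have hfm : StrictMono f := hz.comp (hφ.comp hψ)
  have hfb : ∀ n, |Int.fract ((f n : ℝ) * x₀) - c| ≤ (1 / 2 : ℝ) ^ n := fun n => by
    have := hb n
    rw [Real.dist_eq] at this
    exact this.le
  refine ⟨Set.range f, ?_, Set.infinite_range_of_injective hfm.injective, fun Y hY hYinf => ?_⟩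
  · rintro _ ⟨n, rfl⟩
    exact Nat.nth_mem_of_infinite (p := (· ∈ Z)) (by simpa using hZ) _
  have hYi : (Set.ofPred (· ∈ Y)).Infinite := by simpa using hYinf
  choose k hk using fun n => hY (Nat.nth_mem_of_infinite (p := (· ∈ Y)) hYi n)
  have hkm : StrictMono k := fun m n hmn => by
    rw [← hfm.lt_iff_lt, hk, hk]
    exact Nat.nth_strictMono hYi hmn
  have hkb : ∀ m n, n ≤ m →
      |Int.fract ((Nat.nth (· ∈ Y) m : ℝ) * x₀) - c| ≤ (1 / 2 : ℝ) ^ n := fun m n hmn => by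
    rw [← hk m]
    exact (hfb _).trans
      (pow_le_pow_of_le_one (by norm_num) (by norm_num) (hmn.trans (hkm.id_le m)))
  refine Summable.of_nonneg_of_le (fun n => abs_nonneg _) (fun n => ?_)
    (summable_geometric_two.mul_left 2)
  rw [sub_mul]
  refine (distNearestInt_sub_le _ _).trans ((abs_sub_le _ c _).trans ?_)
  rw [abs_sub_comm c, two_mul]
  exact add_le_add (hkb _ _ n.le_succ) (hkb _ _ le_rfl)
end

section
/- Suppose A ⊆ ℝ is an N₀-set witnessed by the strictly increasing sequence Z = ⟨Z(n) : n ∈ ℕ⟩ of natural numbers, i.e., Σ_{n=0}^∞ |sin(π·Z(n)·x)| < ∞ for every x ∈ A. Then for any infinite set X contained in the range of Z such that the sequence of consecutive differences ⟨X(n+1) − X(n) : n ∈ ℕ⟩ is strictly increasing, the sequence ⟨X(n+1) − X(n) : n ∈ ℕ⟩ also witnesses that A is an N₀-set, i.e., Σ_{n=0}^∞ |sin(π·(X(n+1) − X(n))·x)| < ∞ for every x ∈ A. -/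
open Filter Real Set

/-!
Since `|sin (a - b)| ≤ |sin a| + |sin b|`, the series over consecutive differences of `X` is
dominated by the sum of the series over `X` and its shift. The series over `X` converges because
`X` lies in the range of `Z`, so it is an injective reindexing of a subseries of the convergent
series over `Z`.
-/

theorem n0_witness_consecutive_differences (A : Set ℝ) (Z : ℕ → ℕ) (hZ : StrictMono Z)
    (hwit : ∀ x ∈ A, Summable fun n => |Real.sin (π * Z n * x)|)
    (X : Set ℕ) (hXZ : X ⊆ Set.range Z) (hX : X.Infinite)
    (hdiff : StrictMono fun n => Nat.nth (· ∈ X) (n + 1) - Nat.nth (· ∈ X) n) :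
    ∀ x ∈ A,
      Summable fun n =>
        |Real.sin (π * (Nat.nth (· ∈ X) (n + 1) - Nat.nth (· ∈ X) n : ℕ) * x)| := by
  intro x hx
  have hmono : StrictMono (Nat.nth (· ∈ X)) := Nat.nth_strictMono hX
  choose g hg using fun n => hXZ (Nat.nth_mem_of_infinite (p := (· ∈ X)) hX n)
  have hginj : Function.Injective g := fun m n h => hmono.injective <| by
    rw [← hg m, ← hg n, h]
  have hsum : Summable fun n => |Real.sin (π * (Nat.nth (· ∈ X) n : ℕ) * x)| := by
    simpa only [Function.comp_def, hg] using (hwit x hx).comp_injective hginj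
  refine Summable.of_nonneg_of_le (fun n => abs_nonneg _) (fun n => ?_)
    (((summable_nat_add_iff 1).2 hsum).add hsum)
  -- Monotonicity of the enumeration makes the truncated subtraction a genuine one.
  rw [Nat.cast_sub (hmono.monotone n.le_succ), mul_sub, sub_mul, Real.sin_sub]
  refine (abs_sub _ _).trans (add_le_add ?_ ?_)
  · rw [abs_mul]
    exact mul_le_of_le_one_right (abs_nonneg _) (Real.abs_cos_le_one _)
  · rw [abs_mul]
    exact mul_le_of_le_one_left (abs_nonneg _) (Real.abs_cos_le_one _)
end

section
/- Suppose X is a set of cardinality less than 𝔰, and ⟨f_n : n ∈ ℕ⟩ is a sequence of functions f_n : X → [0,1]. Then there exists a strictly increasing sequence ⟨n_k : k ∈ ℕ⟩ of natural numbers such that the subsequence ⟨f_{n_k} : k ∈ ℕ⟩ converges pointwise on X. -/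
/-!
For countable `X` the cube `[0,1]^X` is compact and metrizable, hence sequentially compact.

For uncountable `X` consider the sets `{n | f n x < q}` with `x ∈ X` and `q ∈ ℚ`. There are at
most `|X| * ℵ₀ = |X| < 𝔰` of them, so they do not form a splitting family: some infinite `B ⊆ ℕ`
is, up to a finite set, contained in or disjoint from each of them. Along the increasing
enumeration of `B`, each sequence `f n x` is eventually below or eventually not below every
rational `q`; a bounded real sequence with this property has equal `liminf` and `limsup`.
The case split avoids having to prove `ℵ₀ < 𝔰`.
-/

open Filter Real Set

/-- A family of fewer than `𝔰` subsets of `ℕ` (finite ones allowed) fails to split some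
infinite set. -/
theorem exists_infinite_unsplit {ι : Type} (hι : Cardinal.mk ι < splittingNumber)
    (A : ι → Set ℕ) :
    ∃ B : Set ℕ, B.Infinite ∧ ∀ i, (B ∩ A i).Finite ∨ (B \ A i).Finite := by
  by_contra! hsplit
  -- Only infinite members are admitted in a splitting family; the finite ones split nothing.
  have hle : splittingNumber ≤ Cardinal.mk ↥{S ∈ Set.range A | S.Infinite} := by
    refine csInf_le' ⟨_, rfl, fun S hS => hS.2, fun B hB => ?_⟩
    obtain ⟨i, h₁, h₂⟩ := hsplit B hB
    exact ⟨A i, ⟨⟨i, rfl⟩, h₁.mono Set.inter_subset_right⟩, h₁, h₂⟩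
  have hcard : Cardinal.mk ↥{S ∈ Set.range A | S.Infinite} ≤ Cardinal.mk ι :=
    (Cardinal.mk_le_mk_of_subset (Set.sep_subset _ _)).trans Cardinal.mk_range_le
  exact absurd (hle.trans hcard) (not_le.mpr hι)

theorem booth_pointwise_convergent_subsequence (X : Type)
    (hX : Cardinal.mk X < splittingNumber)
    (f : ℕ → X → ℝ) (hf : ∀ n x, f n x ∈ Set.Icc (0 : ℝ) 1) :
    ∃ n : ℕ → ℕ, StrictMono n ∧
      ∀ x : X, ∃ L : ℝ, Tendsto (fun k => f (n k) x) atTop (nhds L) := by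
  rcases le_or_gt (Cardinal.mk X) Cardinal.aleph0 with hc | hc
  · have : Countable X := Cardinal.mk_le_aleph0_iff.mp hc
    have hK : IsCompact (Set.univ.pi fun _ : X => Set.Icc (0 : ℝ) 1) :=
      isCompact_univ_pi fun _ => isCompact_Icc
    obtain ⟨L, -, n, hn, hL⟩ := hK.tendsto_subseq (x := f) fun n x _ => hf n x
    exact ⟨n, hn, fun x => ⟨L x, (tendsto_pi_nhds.mp hL) x⟩⟩
  · have hι : Cardinal.mk (X × ℚ) < splittingNumber := by
      rw [Cardinal.mk_prod, Cardinal.lift_id, Cardinal.lift_id, Cardinal.mkRat,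
        Cardinal.mul_aleph0_eq hc.le]
      exact hX
    obtain ⟨B, hB, hAB⟩ :=
      exists_infinite_unsplit hι fun p => {n | f n p.1 < (p.2 : ℝ)}
    have hmono : StrictMono (Nat.nth (· ∈ B)) := Nat.nth_strictMono hB
    have hmem : ∀ k, Nat.nth (· ∈ B) k ∈ B := Nat.nth_mem_of_infinite hB
    refine ⟨Nat.nth (· ∈ B), hmono, fun x => ?_⟩
    have hfreq : ∀ p : ℕ → Prop, (∃ᶠ k in atTop, p (Nat.nth (· ∈ B) k)) →
        (B ∩ {m | p m}).Infinite := fun p hp =>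
      Nat.frequently_atTop_iff_infinite.mp <| hmono.tendsto_atTop.frequently
        (hp.mono fun k hk => ⟨hmem k, hk⟩)
    refine tendsto_of_no_upcrossings Rat.denseRange_cast ?_
      (isBoundedUnder_of ⟨1, fun k => (hf _ x).2⟩) (isBoundedUnder_of ⟨0, fun k => (hf _ x).1⟩)
    rintro _ ⟨a, rfl⟩ _ ⟨b, rfl⟩ hab ⟨ha, hb⟩
    rcases hAB (x, a) with h | h
    · exact hfreq (fun m => f m x < a) ha h
    · exact hfreq (fun m => (b : ℝ) < f m x) hb
        (h.subset fun m hm => ⟨hm.1, not_lt.mpr (hab.trans hm.2).le⟩)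
end
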